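/- arXiv:1912.04531 — 5 statements merged into one kernel-verified Lean document; each statement's English description precedes it below -/
import Mathlib

section
/- Let X_1, X_2, ..., X_N be ℝ^d-valued random vectors on a probability space such that E[X_n | X_1, ..., X_{n-1}] = 0 for each n and ‖X_n‖ ≤ M almost surely. Then for any δ ∈ (0,1), P[‖X_1 + ... + X_N‖² ≤ 2 log(2/δ) M² N] ≥ 1 − δ. -/
open MeasureTheory

/-- Chord bound for the convex function `u ↦ cosh (√u)`. -/
lemma cosh_chord (t a b θ : ℝ) (hθ0 : 0 ≤ θ) (hθ1 : θ ≤ 1)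
    (h : t ^ 2 ≤ θ * a ^ 2 + (1 - θ) * b ^ 2) :
    Real.cosh t ≤ θ * Real.cosh a + (1 - θ) * Real.cosh b := by
  refine hasSum_le (fun n => ?_) (Real.hasSum_cosh t)
    (((Real.hasSum_cosh a).mul_left θ).add ((Real.hasSum_cosh b).mul_left (1 - θ)))
  have h1 : t ^ (2 * n) ≤ θ * a ^ (2 * n) + (1 - θ) * b ^ (2 * n) := by
    simp only [pow_mul]
    refine (pow_le_pow_left₀ (sq_nonneg t) h n).trans ?_
    have := (convexOn_pow n).2 (x := a ^ 2) (sq_nonneg a) (y := b ^ 2) (sq_nonneg b)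
      hθ0 (sub_nonneg.2 hθ1) (by ring)
    simpa [smul_eq_mul] using this
  calc t ^ (2 * n) / ((2 * n).factorial : ℝ)
      ≤ (θ * a ^ (2 * n) + (1 - θ) * b ^ (2 * n)) / ((2 * n).factorial : ℝ) := by gcongr
    _ = _ := by ring

lemma cosh_norm_add_le {E : Type*} [NormedAddCommGroup E] [InnerProductSpace ℝ E]
    (s x : E) (M : ℝ) (hM : 0 < M) (hx : ‖x‖ ≤ M) :
    Real.cosh ‖s + x‖ ≤ Real.cosh ‖s‖ * Real.cosh M +
      inner ℝ ((Real.sinh ‖s‖ / ‖s‖ * (Real.sinh M / M)) • s) x := by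
  rcases eq_or_ne s 0 with rfl | hs
  · simp [abs_of_pos hM, hx]
  have ha : 0 < ‖s‖ := norm_pos_iff.2 hs
  have hc : |inner ℝ s x| ≤ ‖s‖ * M :=
    (abs_real_inner_le_norm s x).trans (by gcongr)
  obtain ⟨hc1, hc2⟩ := abs_le.1 hc
  rw [real_inner_smul_left]
  have hn := norm_add_sq_real s x
  set a := ‖s‖
  set i := inner ℝ s x
  have hx2 : ‖x‖ ^ 2 ≤ M ^ 2 := by gcongr
  have key := cosh_chord ‖s + x‖ (a + M) (a - M) ((1 + i / (a * M)) / 2)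
    (by
      have : -1 ≤ i / (a * M) := by rw [le_div_iff₀ (by positivity)]; linarith
      linarith)
    (by
      have : i / (a * M) ≤ 1 := by rw [div_le_iff₀ (by positivity)]; linarith
      linarith)
    (by
      have : (1 + i / (a * M)) / 2 * (a + M) ^ 2 + (1 - (1 + i / (a * M)) / 2) * (a - M) ^ 2
        = a ^ 2 + M ^ 2 + 2 * i := by field_simp; ring
      rw [this, hn]; linarith)
  refine key.trans (le_of_eq ?_)
  rw [Real.cosh_add, Real.cosh_sub]
  field_simp
  ring

lemma integral_cosh_le {E : Type*} [NormedAddCommGroup E] [InnerProductSpace ℝ E]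
    [CompleteSpace E] [MeasurableSpace E] [BorelSpace E] [SecondCountableTopology E]
    {Ω : Type*} [m0 : MeasurableSpace Ω] (P : Measure Ω)
    [IsProbabilityMeasure P] (M : ℝ) (hM : 0 < M) (X : ℕ → Ω → E)
    (hmeas : ∀ n, Measurable (X n)) (F : ℕ → MeasurableSpace Ω) (hF : ∀ n, F n ≤ m0)
    (hS : ∀ n, Measurable[F n] (fun ω => ∑ i ∈ Finset.range n, X i ω))
    (hmd : ∀ n, P[X n | F n] =ᵐ[P] 0)
    (hbdd : ∀ n, ∀ᵐ ω ∂P, ‖X n ω‖ ≤ M) (n : ℕ) :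
    Integrable (fun ω => Real.cosh ‖∑ i ∈ Finset.range n, X i ω‖) P ∧
    ∫ ω, Real.cosh ‖∑ i ∈ Finset.range n, X i ω‖ ∂P ≤ Real.cosh M ^ n := by
  have hSb : ∀ n, ∀ᵐ ω ∂P, ‖∑ i ∈ Finset.range n, X i ω‖ ≤ n * M := by
    intro n
    filter_upwards [ae_all_iff.2 hbdd] with ω h
    refine (norm_sum_le_of_le _ (fun i _ => h i)).trans ?_
    simp
  have hint : ∀ n, Integrable (fun ω => Real.cosh ‖∑ i ∈ Finset.range n, X i ω‖) P := by
    intro n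
    have hm := (hS n).mono (hF n) le_rfl
    refine Integrable.of_bound (C := Real.cosh (n * M))
      (Real.measurable_cosh.comp hm.norm).aestronglyMeasurable ?_
    filter_upwards [hSb n] with ω h
    rw [Real.norm_eq_abs, abs_of_pos (Real.cosh_pos _), Real.cosh_le_cosh, abs_norm]
    exact h.trans (le_abs_self _)
  refine ⟨hint n, ?_⟩
  induction n with
  | zero => simp
  | succ n ih =>
    set S : Ω → E := fun ω => ∑ i ∈ Finset.range n, X i ω with hSdef
    set k := Real.sinh M / M
    set W : Ω → E := fun ω => (Real.sinh ‖S ω‖ / ‖S ω‖ * k) • S ω with hW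
    have hWm : Measurable[F n] W := by
      have h1 := hS n
      have h2 : Measurable[F n] (fun ω => ‖S ω‖) := measurable_norm.comp h1
      exact (((Real.measurable_sinh.comp h2).div h2).mul_const k).smul h1
    have hXi : Integrable (X n) P :=
      Integrable.of_bound (hmeas n).aestronglyMeasurable M (hbdd n)
    have hWX : Integrable (fun ω => innerSL ℝ (W ω) (X n ω)) P := by
      have hm : Measurable (fun ω => innerSL ℝ (W ω) (X n ω)) := by
        simp only [innerSL_apply_apply]
        exact (hWm.mono (hF n) le_rfl).inner (hmeas n)
      refine Integrable.of_bound (C := Real.sinh (n * M) * |k| * M) hm.aestronglyMeasurable ?_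
      filter_upwards [hSb n, hbdd n] with ω h1 h2
      rw [innerSL_apply_apply]
      refine (norm_inner_le_norm _ _).trans ?_
      have h3 : ‖W ω‖ ≤ Real.sinh (n * M) * |k| := by
        simp only [hW, norm_smul, norm_mul, norm_div, Real.norm_eq_abs]
        have h4 : |Real.sinh ‖S ω‖| = Real.sinh ‖S ω‖ :=
          abs_of_nonneg (Real.sinh_nonneg_iff.2 (norm_nonneg _))
        have h5 : Real.sinh ‖S ω‖ ≤ Real.sinh (n * M) := Real.sinh_le_sinh.2 h1
        rw [h4]
        rcases eq_or_ne (‖S ω‖) 0 with h0 | h0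
        · rw [h0] at h5 ⊢
          simp only [mul_zero]
          rw [Real.sinh_zero] at h5
          positivity
        · calc _ = Real.sinh ‖S ω‖ * |k| := by rw [abs_norm]; field_simp
            _ ≤ _ := by gcongr
      gcongr
    have hzero : ∫ ω, innerSL ℝ (W ω) (X n ω) ∂P = 0 := by
      rw [← integral_condExp (hF n)]
      have h1 := condExp_bilin_of_stronglyMeasurable_left (innerSL ℝ)
        (hWm.stronglyMeasurable) hWX hXi
      rw [integral_congr_ae h1]
      rw [integral_congr_ae (g := fun _ => (0 : ℝ)), integral_zero]
      filter_upwards [hmd n] with ω h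
      rw [h]; simp
    have hle : ∫ ω, Real.cosh ‖∑ i ∈ Finset.range (n + 1), X i ω‖ ∂P ≤
        ∫ ω, (Real.cosh ‖S ω‖ * Real.cosh M + innerSL ℝ (W ω) (X n ω)) ∂P := by
      refine integral_mono_ae (hint (n + 1)) (((hint n).mul_const _).add hWX) ?_
      filter_upwards [hbdd n] with ω h
      simp only [Finset.sum_range_succ]
      exact cosh_norm_add_le _ _ M hM h
    refine hle.trans ?_
    rw [integral_add ((hint n).mul_const _) hWX, hzero, add_zero, integral_mul_const, pow_succ]
    gcongr

lemma measurable_natural {E Ω : Type*} [mE : MeasurableSpace E] (X : ℕ → Ω → E) (n i : ℕ)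
    (hi : i ∈ Finset.range n) :
    Measurable[⨆ j ∈ Finset.range n, MeasurableSpace.comap (X j) mE] (X i) := by
  have h1 : MeasurableSpace.comap (X i) mE ≤
      ⨆ j ∈ Finset.range n, MeasurableSpace.comap (X j) mE :=
    le_iSup₂ (f := fun j (_ : j ∈ Finset.range n) => MeasurableSpace.comap (X j) mE) i hi
  exact (comap_measurable (X i)).mono h1 le_rfl

/-- Azuma-type concentration (Lemma 2.4 of Alistarh et al.): if `X 0, ..., X (N-1)` are
`ℝ^d`-valued random vectors with `E[X n | X 0, ..., X (n-1)] = 0` and `‖X n‖ ≤ M` a.s.,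
then `P[‖X 0 + ⋯ + X (N-1)‖² ≤ 2 log(2/δ) M² N] ≥ 1 − δ`. -/
theorem stmt1 {d : ℕ} {Ω : Type*} [m0 : MeasurableSpace Ω] (P : Measure Ω)
    [IsProbabilityMeasure P] (N : ℕ) (M δ : ℝ) (hM : 0 < M) (hδ : δ ∈ Set.Ioo (0 : ℝ) 1)
    (X : ℕ → Ω → EuclideanSpace ℝ (Fin d))
    (hmeas : ∀ n, Measurable (X n))
    -- martingale-difference property w.r.t. the natural filtration:
    -- `E[X n | X 0, ..., X (n-1)] = 0` a.s., where the conditioning σ-algebra is the one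
    -- generated by the preceding variables
    (hmd : ∀ n, P[X n | ⨆ i ∈ Finset.range n, MeasurableSpace.comap (X i) (by infer_instance)]
      =ᵐ[P] 0)
    (hbdd : ∀ n, ∀ᵐ ω ∂P, ‖X n ω‖ ≤ M) :
    ENNReal.ofReal (1 - δ) ≤
      P {ω | ‖∑ n ∈ Finset.range N, X n ω‖ ^ 2 ≤ 2 * Real.log (2 / δ) * M ^ 2 * N} := by
  classical
  obtain ⟨hδ0, hδ1⟩ := hδ
  rcases Nat.eq_zero_or_pos N with rfl | hN
  · simp [hδ0.le]
  have hN' : (0 : ℝ) < N := by exact_mod_cast hN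
  have hL : 0 < Real.log (2 / δ) := Real.log_pos (by rw [lt_div_iff₀ hδ0]; linarith)
  set L := Real.log (2 / δ) with hLdef
  set r := Real.sqrt (2 * L * M ^ 2 * N) with hr
  have hr2 : r ^ 2 = 2 * L * M ^ 2 * N := Real.sq_sqrt (by positivity)
  have hr0 : 0 < r := Real.sqrt_pos.2 (by positivity)
  set l := r / (N * M ^ 2) with hl
  have hl0 : 0 < l := by positivity
  obtain ⟨F, hFdef⟩ : ∃ F : ℕ → MeasurableSpace Ω, F = fun n =>
    ⨆ i ∈ Finset.range n, MeasurableSpace.comap (X i) (by infer_instance) := ⟨_, rfl⟩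
  have hmdF : ∀ n, P[X n | F n] =ᵐ[P] 0 := by
    rw [hFdef]; exact hmd
  have hF : ∀ n, F n ≤ m0 := by
    intro n
    rw [hFdef]
    exact iSup₂_le (fun i _ => (hmeas i).comap_le)
  have hXF : ∀ n, ∀ i ∈ Finset.range n, Measurable[F n] (X i) := by
    intro n i hi
    rw [hFdef]
    exact measurable_natural X n i hi
  have hSF : ∀ n, Measurable[F n] (fun ω => ∑ i ∈ Finset.range n, l • X i ω) := by
    intro n
    refine Finset.measurable_fun_sum _ (fun i hi => ?_)
    exact (measurable_const_smul l).comp (hXF n i hi)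
  have hmd2 : ∀ n, P[fun ω => l • X n ω | F n] =ᵐ[P] 0 := by
    intro n
    have h0 : P[fun ω => l • X n ω | F n] =ᵐ[P] l • P[X n | F n] := condExp_smul l (X n) (F n)
    refine h0.trans ?_
    filter_upwards [hmdF n] with ω h
    simp [h]
  have hbd2 : ∀ n, ∀ᵐ ω ∂P, ‖l • X n ω‖ ≤ l * M := by
    intro n
    filter_upwards [hbdd n] with ω h
    rw [norm_smul, Real.norm_eq_abs, abs_of_pos hl0]
    gcongr
  obtain ⟨hint, hle⟩ := integral_cosh_le P (l * M) (by positivity) (fun n ω => l • X n ω)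
    (fun n => (hmeas n).const_smul l) F hF hSF hmd2 hbd2 N
  simp only [← Finset.smul_sum, norm_smul, Real.norm_eq_abs, abs_of_pos hl0] at hint hle
  have hmk := mul_meas_ge_le_integral_of_nonneg
    (Filter.Eventually.of_forall (fun ω => (Real.cosh_pos _).le)) hint (Real.cosh (l * r))
  have hlr : l * r = 2 * L := by
    rw [hl, div_mul_eq_mul_div, ← sq, hr2]; field_simp
  have hpow : Real.cosh (l * M) ^ N ≤ Real.exp L := by
    calc Real.cosh (l * M) ^ N ≤ Real.exp ((l * M) ^ 2 / 2) ^ N := by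
          gcongr
          · exact Real.cosh_le_exp_half_sq _
      _ = Real.exp L := by
          rw [← Real.exp_nat_mul]
          congr 1
          rw [hl]
          field_simp
          rw [hr2]; ring
  have hcosh : Real.exp (2 * L) / 2 ≤ Real.cosh (l * r) := by
    rw [hlr, Real.cosh_eq]
    have := Real.exp_pos (-(2 * L))
    linarith
  have hexp : Real.exp L = 2 / δ := Real.exp_log (by positivity)
  set A := {ω | Real.cosh (l * r) ≤ Real.cosh (l * ‖∑ i ∈ Finset.range N, X i ω‖)} with hA
  have hPA : P.real A ≤ δ := by
    have h1 : Real.exp (2 * L) / 2 * P.real A ≤ Real.exp L :=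
      (mul_le_mul_of_nonneg_right hcosh measureReal_nonneg).trans (hmk.trans (hle.trans hpow))
    rw [two_mul, Real.exp_add, hexp] at h1
    have h2 : (2 / δ) * (P.real A / δ) ≤ (2 / δ) * 1 := by
      calc _ = 2 / δ * (2 / δ) / 2 * P.real A := by ring
        _ ≤ _ := by rw [mul_one]; exact h1
    have h3 := le_of_mul_le_mul_left h2 (by positivity)
    rwa [div_le_one hδ0] at h3
  set B := {ω | ‖∑ n ∈ Finset.range N, X n ω‖ ^ 2 ≤ 2 * L * M ^ 2 * N} with hB
  have hSm' : Measurable (fun ω => ∑ n ∈ Finset.range N, X n ω) :=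
    Finset.measurable_sum _ (fun i _ => hmeas i)
  have hBm : MeasurableSet B := measurableSet_le (hSm'.norm.pow_const 2) measurable_const
  have hsub : Bᶜ ⊆ A := by
    intro ω hω
    simp only [hB, Set.mem_compl_iff, Set.mem_ofPred_eq, not_le, ← hr2] at hω
    have h1 : r < ‖∑ n ∈ Finset.range N, X n ω‖ := lt_of_pow_lt_pow_left₀ 2 (norm_nonneg _) hω
    simp only [hA, Set.mem_ofPred_eq, Real.cosh_le_cosh]
    rw [abs_of_pos (by positivity), abs_of_nonneg (by positivity)]
    gcongr
  have h1 : P.real Bᶜ ≤ δ := (measureReal_mono hsub).trans hPA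
  rw [probReal_compl_eq_one_sub hBm] at h1
  refine ENNReal.ofReal_le_of_le_toReal ?_
  change 1 - δ ≤ P.real B
  linarith
end

section
/- Let g ∈ ℝ^d, V > 0, and let μ^(1), ..., μ^(K) ∈ ℝ^d with a subset G ⊆ {1,...,K} of size |G| > K/2 such that μ^(k) = (1/B)∑_{i=1}^B g_{k,i} for each k ∈ G, where every g_{k,i} satisfies ‖g_{k,i} − g‖ ≤ V. Then: (a) ‖μ^(k) − g‖ ≤ V for all k ∈ G; (b) if μ_med = μ^(j) for any index j ∈ {1,...,K} such that |{k' ∈ {1,...,K} : ‖μ^(k')− μ^(j)‖ ≤ 2V}| > K/2, then ‖μ_med − g‖ ≤ 3V and ‖μ^(k) − μ_med‖ ≤ 4V for every k ∈ G. -/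
open scoped Classical

/-- Lemma: if for each honest node `k ∈ G` (with `|G| > K/2`) the vector `μ k` is the
average of `B` samples each within distance `V` of `g`, then (a) `‖μ k − g‖ ≤ V` for all
`k ∈ G`, and (b) for any vector median `μ j` (a vector with more than half of the `K`
vectors within distance `2V` of it) we have `‖μ j − g‖ ≤ 3V` and `‖μ k − μ j‖ ≤ 4V` for
every `k ∈ G`. -/
theorem stmt4 {d K B : ℕ} (hK : 0 < K) (hB : 0 < B)
    (g : EuclideanSpace ℝ (Fin d)) (V : ℝ) (hV : 0 < V)
    (μ : Fin K → EuclideanSpace ℝ (Fin d)) (G : Finset (Fin K))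
    (hGcard : (K : ℝ) / 2 < G.card)
    (gs : Fin K → Fin B → EuclideanSpace ℝ (Fin d))
    (havg : ∀ k ∈ G, μ k = (B : ℝ)⁻¹ • ∑ i, gs k i)
    (hbd : ∀ k ∈ G, ∀ i, ‖gs k i - g‖ ≤ V) :
    (∀ k ∈ G, ‖μ k - g‖ ≤ V) ∧
    (∀ j : Fin K,
      (K : ℝ) / 2 < (Finset.univ.filter fun k' => ‖μ k' - μ j‖ ≤ 2 * V).card →
      ‖μ j - g‖ ≤ 3 * V ∧ ∀ k ∈ G, ‖μ k - μ j‖ ≤ 4 * V) := by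
  have hBr : (0 : ℝ) < B := by exact_mod_cast hB
  have ha : ∀ k ∈ G, ‖μ k - g‖ ≤ V := by
    intro k hk
    have e : μ k - g = (B : ℝ)⁻¹ • ∑ i, (gs k i - g) := by
      rw [havg k hk, Finset.sum_sub_distrib, smul_sub]
      congr 1
      rw [Finset.sum_const, Finset.card_univ, Fintype.card_fin, ← Nat.cast_smul_eq_nsmul ℝ,
        smul_smul, inv_mul_cancel₀ hBr.ne', one_smul]
    rw [e, norm_smul, norm_inv, Real.norm_of_nonneg hBr.le, inv_mul_le_iff₀ hBr]
    calc ‖∑ i, (gs k i - g)‖ ≤ ∑ i, ‖gs k i - g‖ := norm_sum_le _ _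
      _ ≤ ∑ _i : Fin B, V := Finset.sum_le_sum fun i _ => hbd k hk i
      _ = B * V := by simp
  refine ⟨ha, ?_⟩
  intro j hj
  set S := Finset.univ.filter fun k' => ‖μ k' - μ j‖ ≤ 2 * V with hS
  have hne : ∃ k, k ∈ G ∧ k ∈ S := by
    by_contra hcon
    push Not at hcon
    have hd : Disjoint G S := Finset.disjoint_left.2 hcon
    have h1 := Finset.card_le_univ (G ∪ S)
    rw [Finset.card_union_of_disjoint hd, Fintype.card_fin] at h1
    have h2 : (G.card : ℝ) + S.card ≤ K := by exact_mod_cast h1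
    linarith
  obtain ⟨k, hkG, hkS⟩ := hne
  have hk2 : ‖μ k - μ j‖ ≤ 2 * V := (Finset.mem_filter.1 hkS).2
  have h3 : ‖μ j - g‖ ≤ 3 * V := by
    have := norm_sub_le_norm_sub_add_norm_sub (μ j) (μ k) g
    rw [norm_sub_rev (μ j) (μ k)] at this
    linarith [ha k hkG]
  refine ⟨h3, fun l hl => ?_⟩
  have := norm_sub_le_norm_sub_add_norm_sub (μ l) g (μ j)
  rw [norm_sub_rev g (μ j)] at this
  linarith [ha l hl]
end

section
/- Let g ∈ ℝ^d, T > 0, and let μ^(1), ..., μ^(K) ∈ ℝ^d with a subset G ⊆ {1,...,K} of size |G| > K/2 such that ‖μ^(k) − g‖ ≤ T for all k ∈ G. Then: (i) every j ∈ G satisfies |{k' ∈ {1,...,K} : ‖μ^(k')− μ^(j)‖ ≤ 2T}| > K/2, so a vector median with threshold 2T exists; (ii) for any j ∈ {1,...,K} with |{k' : ‖μ^(k')− μ^(j)‖ ≤ 2T}| > K/2, setting μ_med = μ^(j), one has ‖μ_med − g‖ ≤ 3T and ‖μ^(k) − μ_med‖ ≤ 4T for every k ∈ G. -/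
open scoped Classical

/-- Lemma: if `‖μ k − g‖ ≤ T` for all `k` in a majority set `G` (`|G| > K/2`), then
(i) every `j ∈ G` is a vector median with threshold `2T`, i.e. more than half of the `K`
vectors lie within distance `2T` of `μ j`; and (ii) for any such median `μ j` we have
`‖μ j − g‖ ≤ 3T` and `‖μ k − μ j‖ ≤ 4T` for every `k ∈ G`. -/
theorem stmt5 {d K : ℕ} (hK : 0 < K)
    (g : EuclideanSpace ℝ (Fin d)) (T : ℝ) (hT : 0 < T)
    (μ : Fin K → EuclideanSpace ℝ (Fin d)) (G : Finset (Fin K))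
    (hGcard : (K : ℝ) / 2 < G.card)
    (hbd : ∀ k ∈ G, ‖μ k - g‖ ≤ T) :
    (∀ j ∈ G,
      (K : ℝ) / 2 < (Finset.univ.filter fun k' => ‖μ k' - μ j‖ ≤ 2 * T).card) ∧
    (∀ j : Fin K,
      (K : ℝ) / 2 < (Finset.univ.filter fun k' => ‖μ k' - μ j‖ ≤ 2 * T).card →
      ‖μ j - g‖ ≤ 3 * T ∧ ∀ k ∈ G, ‖μ k - μ j‖ ≤ 4 * T) := by
  have key : ∀ a b c : EuclideanSpace ℝ (Fin d), ‖a - c‖ ≤ ‖a - b‖ + ‖b - c‖ :=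
    fun a b c => norm_sub_le_norm_sub_add_norm_sub a b c
  refine ⟨fun j hj => ?_, fun j hj => ?_⟩
  · refine lt_of_lt_of_le hGcard ?_
    have hsub : G ⊆ Finset.univ.filter fun k' => ‖μ k' - μ j‖ ≤ 2 * T := by
      intro k hk
      rw [Finset.mem_filter]
      refine ⟨Finset.mem_univ _, ?_⟩
      have h1 := key (μ k) g (μ j)
      have h2 := hbd k hk
      have h3 := hbd j hj
      rw [norm_sub_rev] at h3
      linarith
    exact_mod_cast Finset.card_le_card hsub
  · set S := Finset.univ.filter fun k' => ‖μ k' - μ j‖ ≤ 2 * T with hS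
    have hne : (G ∩ S).Nonempty := by
      rw [← Finset.card_pos]
      have h1 := Finset.card_union_add_card_inter G S
      have h2 : (G ∪ S).card ≤ K := by
        simpa using Finset.card_le_univ (G ∪ S)
      have h3 : (K : ℝ) < G.card + S.card := by linarith
      have h4 : K < G.card + S.card := by exact_mod_cast h3
      omega
    obtain ⟨k, hk⟩ := hne
    rw [Finset.mem_inter] at hk
    have hkS : ‖μ k - μ j‖ ≤ 2 * T := (Finset.mem_filter.mp hk.2).2
    have hjg : ‖μ j - g‖ ≤ 3 * T := by
      have h1 := key (μ j) (μ k) g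
      have h2 := hbd k hk.1
      rw [norm_sub_rev] at hkS
      linarith
    refine ⟨hjg, fun l hl => ?_⟩
    have h1 := key (μ l) g (μ j)
    have h2 := hbd l hl
    rw [norm_sub_rev] at hjg
    linarith
end

section
/- Let g ∈ ℝ^d, T > 0, α ∈ [0, 1/2), and μ^(1), ..., μ^(K) ∈ ℝ^d with G ⊆ {1,...,K}, |G| ≥ (1−α)K, and ‖μ^(k) − g‖ ≤ T for all k ∈ G. Let μ_med be any μ^(j) with |{k' : ‖μ^(k')− μ^(j)‖ ≤ 2T}| > K/2, and define G_t = {k ∈ {1,...,K} : ‖μ^(k) − μ_med‖ ≤ 4T}. Then G ⊆ G_t, and consequently |G_t| ≥ (1 − α)K and |G_t \ G| ≤ αK. -/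
open scoped Classical

/-- Byzantine filtering: if `‖μ k − g‖ ≤ T` for all `k` in the honest set `G` with
`|G| ≥ (1−α)K` (and `(1−α)K > K/2`), and `μ j` is a vector median (more than half of the
`K` vectors lie within `2T` of it), then the filtered set
`G_t = {k : ‖μ k − μ j‖ ≤ 4T}` contains `G`, has `|G_t| ≥ (1−α)K`, and
`|G_t \ G| ≤ αK`. -/
theorem stmt7 {d K : ℕ} (hK : 0 < K)
    (g : EuclideanSpace ℝ (Fin d)) (T α : ℝ) (hT : 0 < T)
    (hα : α ∈ Set.Ico (0 : ℝ) (1 / 2))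
    (μ : Fin K → EuclideanSpace ℝ (Fin d)) (G : Finset (Fin K))
    (hGcard : (1 - α) * K ≤ G.card)
    (hbd : ∀ k ∈ G, ‖μ k - g‖ ≤ T)
    (j : Fin K)
    (hmed : (K : ℝ) / 2 < (Finset.univ.filter fun k' => ‖μ k' - μ j‖ ≤ 2 * T).card)
    (Gt : Finset (Fin K))
    (hGt : Gt = Finset.univ.filter fun k => ‖μ k - μ j‖ ≤ 4 * T) :
    G ⊆ Gt ∧ (1 - α) * K ≤ Gt.card ∧ (Gt \ G).card ≤ α * K := by
  obtain ⟨hα0, hα1⟩ := hα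
  have hK' : (0 : ℝ) < K := by exact_mod_cast hK
  have hsub : G ⊆ Gt := by
    obtain ⟨m, hmG, hmM⟩ : ∃ m ∈ G, ‖μ m - μ j‖ ≤ 2 * T := by
      by_contra! hno
      have hdisj : Disjoint G (Finset.univ.filter fun k' => ‖μ k' - μ j‖ ≤ 2 * T) := by
        rw [Finset.disjoint_left]
        intro k hk hk2
        exact absurd (Finset.mem_filter.mp hk2).2 (not_le.mpr (hno k hk))
      have h1 := Finset.card_le_univ
        (G.disjUnion (Finset.univ.filter fun k' => ‖μ k' - μ j‖ ≤ 2 * T) hdisj)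
      rw [Finset.card_disjUnion, Fintype.card_fin] at h1
      have h2 : (G.card : ℝ) +
          ((Finset.univ.filter fun k' => ‖μ k' - μ j‖ ≤ 2 * T).card : ℝ) ≤ K := by
        exact_mod_cast h1
      nlinarith
    intro k hk
    rw [hGt, Finset.mem_filter]
    refine ⟨Finset.mem_univ _, ?_⟩
    have e : μ k - μ j = (μ k - g) - (μ m - g) + (μ m - μ j) := by abel
    have h1 := norm_add_le ((μ k - g) - (μ m - g)) (μ m - μ j)
    have h2 := norm_sub_le (μ k - g) (μ m - g)
    have h3 := hbd k hk
    have h4 := hbd m hmG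
    rw [e]
    linarith
  refine ⟨hsub, ?_, ?_⟩
  · have : (G.card : ℝ) ≤ Gt.card := by exact_mod_cast Finset.card_le_card hsub
    linarith
  · have h1 := Finset.card_sdiff_add_card_eq_card hsub
    have h2 := Finset.card_le_univ Gt
    rw [Fintype.card_fin, ← h1] at h2
    have h3 : ((Gt \ G).card : ℝ) + G.card ≤ K := by exact_mod_cast h2
    linarith
end

section
/- Let (Ω, P) be a probability space and D a distribution of samples ξ. Suppose f(·;ξ): ℝ^d → ℝ has a gradient ∇f(·;ξ) that is L-Lipschitz for each ξ, and f(x) = E_{ξ∼D} f(x;ξ) with ∇f(x) = E_{ξ∼D} ∇f(x;ξ). Fix x, x_0, μ ∈ ℝ^d, set e = μ − ∇f(x_0), and for ξ ∼ D define v = ∇f(x;ξ) − ∇f(x_0;ξ) + μ. Then E_ξ[v] = ∇f(x) + e and E_ξ‖v‖² ≤ L²‖x − x_0‖² + 2‖∇f(x)‖² + 2‖e‖². -/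
open MeasureTheory

/-- Properties of the SVRG direction: with `e = μ − ∇f(x₀)` and
`v(ξ) = ∇f(x;ξ) − ∇f(x₀;ξ) + μ`, one has `E_ξ[v] = ∇f(x) + e` and
`E_ξ‖v‖² ≤ L²‖x − x₀‖² + 2‖∇f(x)‖² + 2‖e‖²`. -/
theorem stmt11 {d : ℕ} {Ξ : Type*} [MeasurableSpace Ξ] (D : Measure Ξ)
    [IsProbabilityMeasure D] (L : ℝ) (hL : 0 < L)
    (F : EuclideanSpace ℝ (Fin d) → Ξ → ℝ)
    (gradF : EuclideanSpace ℝ (Fin d) → Ξ → EuclideanSpace ℝ (Fin d))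
    (f : EuclideanSpace ℝ (Fin d) → ℝ)
    (gradf : EuclideanSpace ℝ (Fin d) → EuclideanSpace ℝ (Fin d))
    -- `gradF x ξ` is the gradient of `f(⋅;ξ)` at `x`, and it is `L`-Lipschitz in `x`
    (hgrad : ∀ ξ x, HasGradientAt (fun y => F y ξ) (gradF x ξ) x)
    (hLip : ∀ ξ y z, ‖gradF y ξ - gradF z ξ‖ ≤ L * ‖y - z‖)
    -- `f = E_ξ f(⋅;ξ)` and `∇f = E_ξ ∇f(⋅;ξ)`
    (hf : ∀ x, f x = ∫ ξ, F x ξ ∂D)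
    (hgradf : ∀ x, gradf x = ∫ ξ, gradF x ξ ∂D)
    (x x₀ μ e : EuclideanSpace ℝ (Fin d)) (he : e = μ - gradf x₀)
    -- all expectations are assumed finite
    (hint : ∀ y, Integrable (fun ξ => gradF y ξ) D)
    (hint2 : Integrable (fun ξ => ‖gradF x ξ - gradF x₀ ξ + μ‖ ^ 2) D) :
    (∫ ξ, (gradF x ξ - gradF x₀ ξ + μ) ∂D = gradf x + e) ∧
    ∫ ξ, ‖gradF x ξ - gradF x₀ ξ + μ‖ ^ 2 ∂D ≤
      L ^ 2 * ‖x - x₀‖ ^ 2 + 2 * ‖gradf x‖ ^ 2 + 2 * ‖e‖ ^ 2 := by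
  have hg : Integrable (fun ξ => gradF x ξ - gradF x₀ ξ) D := (hint x).sub (hint x₀)
  have hG : ∫ ξ, (gradF x ξ - gradF x₀ ξ) ∂D = gradf x - gradf x₀ := by
    rw [integral_sub (hint x) (hint x₀), hgradf x, hgradf x₀]
  have hEq : gradf x - gradf x₀ + μ = gradf x + e := by
    rw [he]; abel
  constructor
  · rw [integral_add hg (integrable_const μ), hG, integral_const]
    simp [hEq]
  · have hin : Integrable (fun ξ => inner ℝ μ (gradF x ξ - gradF x₀ ξ)) D := hg.const_inner μ
    have hI : ∫ ξ, inner ℝ μ (gradF x ξ - gradF x₀ ξ) ∂D = inner ℝ μ (gradf x - gradf x₀) := by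
      rw [integral_inner hg, hG]
    have h1 : ∫ ξ, ‖gradF x ξ - gradF x₀ ξ + μ‖ ^ 2 ∂D ≤
        ∫ ξ, (2 * inner ℝ μ (gradF x ξ - gradF x₀ ξ)
          + (L ^ 2 * ‖x - x₀‖ ^ 2 + ‖μ‖ ^ 2)) ∂D := by
      refine integral_mono hint2 ((hin.const_mul 2).add (integrable_const _)) fun ξ => ?_
      have h := pow_le_pow_left₀ (norm_nonneg _) (hLip ξ x x₀) 2
      have h2 := norm_add_sq_real (gradF x ξ - gradF x₀ ξ) μ
      rw [real_inner_comm] at h2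
      rw [mul_pow] at h
      simp only
      linarith
    rw [integral_add (hin.const_mul 2) (integrable_const _), integral_const_mul, hI,
      integral_const] at h1
    simp only [probReal_univ, one_smul] at h1
    have h3 := norm_add_sq_real (gradf x - gradf x₀) μ
    rw [real_inner_comm, hEq] at h3
    have h4 := parallelogram_law_with_norm ℝ (gradf x) e
    nlinarith [sq_nonneg ‖gradf x - gradf x₀‖, sq_nonneg ‖gradf x - e‖]
end
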